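/- (Pointwise inequality underlying Lemma on translated maxima.) Assume W satisfies (W6)–(W10). Fix t ∈ ℝ and z ∈ ℝ^{2N} with z ≠ 0. For r ≥ −1 and v ∈ ℝ^{2N} define f(r,v) := ( r(r/2 + 1) z + (1 + r) v )·∇W(t,z) + W(t,z) − W(t, (1+r)z + v). Then f(r,v) ≤ 0 for all r ≥ −1 and v ∈ ℝ^{2N}, and f(r,v) < 0 unless r = 0 and v = 0. -/

import Mathlib

open scoped RealInnerProductSpace

theorem aux_one_dim (h h' : ℝ → ℝ) (hd : ∀ s, HasDerivAt h (h' s) s) (hc : Continuous h')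
    (h2 : ∀ s > 0, 0 < h s ∧ 2 * h s < s * h' s)
    (hinj : ∀ s > 0, ∀ s' > 0, s ≠ s' → s' * h' s ≠ s * h' s') :
    ∀ s ≥ 0, s ≠ 1 → h' 1 * (s ^ 2 - 1) / 2 < h s - h 1 := by
  have hcont : Continuous h := continuous_iff_continuousAt.2 fun s => (hd s).continuousAt
  have h0 : 0 ≤ h 0 := by
    have h1 : Filter.Tendsto h (nhdsWithin 0 (Set.Ioi 0)) (nhds (h 0)) :=
      (hcont.tendsto 0).mono_left nhdsWithin_le_nhds
    refine ge_of_tendsto h1 ?_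
    filter_upwards [self_mem_nhdsWithin] with s hs
    exact (h2 s hs).1.le
  set m : ℝ → ℝ := fun s => h s - h' 1 * s ^ 2 / 2 with hm
  have md : ∀ s, HasDerivAt m (h' s - h' 1 * s) s := by
    intro s
    have := (hd s).sub ((((hasDerivAt_id s).pow 2).const_mul (h' 1)).div_const 2)
    refine HasDerivAt.congr_deriv this ?_
    simp
    ring
  have mc : Continuous m := by fun_prop
  set k : ℝ → ℝ := fun s => h' s / s with hk
  have kc : ContinuousOn k (Set.Ioi 0) :=
    hc.continuousOn.div continuousOn_id fun s hs => ne_of_gt hs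
  have ki : Set.InjOn k (Set.Ioi 0) := by
    intro a ha b hb hab
    by_contra hne
    apply hinj a ha b hb hne
    have ha' : a ≠ 0 := ne_of_gt ha
    have hb' : b ≠ 0 := ne_of_gt hb
    simp only [hk] at hab
    field_simp at hab
    linarith
  have hk1 : k 1 = h' 1 := by simp [hk]
  have hks : ∀ s > 0, h' s = k s * s := fun s hs => by
    simp only [hk]; field_simp
  have one : (1 : ℝ) ∈ Set.Ioi (0 : ℝ) := by simp
  have hor : StrictMonoOn k (Set.Ioi 0) ∨ StrictAntiOn k (Set.Ioi 0) := by
    have : Inhabited (Set.Ioi (0 : ℝ)) := ⟨⟨1, one⟩⟩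
    have : StrictMono (Set.domRestrict (Set.Ioi 0) k) ∨ StrictAnti (Set.domRestrict (Set.Ioi 0) k) :=
      Continuous.strictMono_of_inj kc.domRestrict ki.injective
    exact this.imp (fun H a ha b hb hab => H (show (⟨a, ha⟩ : Set.Ioi (0 : ℝ)) < ⟨b, hb⟩ from hab))
      (fun H a ha b hb hab => H (show (⟨a, ha⟩ : Set.Ioi (0 : ℝ)) < ⟨b, hb⟩ from hab))
  rcases hor with hmono | hanti
  · have A : StrictAntiOn m (Set.Icc 0 1) := by
      apply strictAntiOn_of_deriv_neg (convex_Icc 0 1) mc.continuousOn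
      intro s hs
      rw [interior_Icc] at hs
      have := hmono (show s ∈ Set.Ioi (0 : ℝ) from hs.1) one hs.2
      rw [(md s).deriv, hks s hs.1, ← hk1]
      nlinarith [hs.1]
    have B : StrictMonoOn m (Set.Ici 1) := by
      apply strictMonoOn_of_deriv_pos (convex_Ici 1) mc.continuousOn
      intro s hs
      rw [interior_Ici] at hs
      have hs1 : 1 < s := hs
      have := hmono one (show s ∈ Set.Ioi (0 : ℝ) from by simp; linarith) hs1
      rw [(md s).deriv, hks s (by linarith), ← hk1]
      nlinarith
    intro s hs hs1
    have : m 1 < m s := by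
      rcases lt_or_gt_of_ne hs1 with h1 | h1
      · exact A ⟨hs, h1.le⟩ ⟨zero_le_one, le_rfl⟩ h1
      · exact B (by simp) (by simpa using h1.le) h1
    simp only [hm] at this
    linarith
  · exfalso
    have A : StrictMonoOn m (Set.Icc 0 1) := by
      apply strictMonoOn_of_deriv_pos (convex_Icc 0 1) mc.continuousOn
      intro s hs
      rw [interior_Icc] at hs
      have := hanti (show s ∈ Set.Ioi (0 : ℝ) from hs.1) one hs.2
      rw [(md s).deriv, hks s hs.1, ← hk1]
      nlinarith [hs.1]
    have := A (by simp) (by simp) (zero_lt_one)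
    have h21 := (h2 1 one).2
    simp only [hm] at this
    norm_num at this
    linarith

/-- pointwise inequality underlying the lemma on translated maxima.
Under (W6)–(W10), for fixed `t` and `z ≠ 0`, the function
`f(r,v) = (r(r/2+1)z + (1+r)v)·∇W(t,z) + W(t,z) − W(t,(1+r)z+v)`
is `≤ 0` on `[−1,∞) × ℝ^{2N}`, and `< 0` unless `(r,v) = (0,0)`. -/
theorem stmt8 (N : ℕ) (hN : 1 ≤ N)
    (W : ℝ → EuclideanSpace ℝ (Fin (2 * N)) → ℝ)
    (hWC1 : ContDiff ℝ 1 (fun q : ℝ × EuclideanSpace ℝ (Fin (2 * N)) => W q.1 q.2))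
    (hW6 : ∀ (t : ℝ) (u v : EuclideanSpace ℝ (Fin (2 * N))),
      0 ≤ ⟪v, gradient (W t) u⟫ * ⟪u, v⟫)
    (hW7 : ∃ γ > (2 : ℝ), ∀ M > (0 : ℝ), ∃ R > (0 : ℝ),
      ∀ (t : ℝ) (u : EuclideanSpace ℝ (Fin (2 * N))), R ≤ ‖u‖ → M * ‖u‖ ^ γ ≤ W t u)
    (hW8 : ∀ (t : ℝ) (u : EuclideanSpace ℝ (Fin (2 * N))), u ≠ 0 →
      0 < W t u ∧ 2 * W t u < ⟪u, gradient (W t) u⟫)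
    (hW9 : ∀ (t : ℝ) (u v : EuclideanSpace ℝ (Fin (2 * N))), ‖u‖ = ‖v‖ →
      W t u = W t v ∧ ⟪v, gradient (W t) u⟫ ≤ ⟪u, gradient (W t) u⟫ ∧
        (u ≠ v → ⟪v, gradient (W t) u⟫ < ⟪u, gradient (W t) u⟫))
    (hW10 : ∀ (t : ℝ) (u v : EuclideanSpace ℝ (Fin (2 * N))), ‖u‖ ≠ ‖v‖ → ⟪u, v⟫ ≠ 0 →
      ⟪v, gradient (W t) u⟫ ≠ ⟪u, gradient (W t) v⟫)
    (t : ℝ) (z : EuclideanSpace ℝ (Fin (2 * N))) (hz : z ≠ 0) :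
    ∀ r : ℝ, -1 ≤ r → ∀ v : EuclideanSpace ℝ (Fin (2 * N)),
      (⟪(r * (r / 2 + 1)) • z + (1 + r) • v, gradient (W t) z⟫ + W t z
          - W t ((1 + r) • z + v) ≤ 0) ∧
      (¬(r = 0 ∧ v = 0) →
        ⟪(r * (r / 2 + 1)) • z + (1 + r) • v, gradient (W t) z⟫ + W t z
          - W t ((1 + r) • z + v) < 0) := by
  have hWd : Differentiable ℝ (W t) := by
    have h1 := hWC1.differentiable one_ne_zero
    exact h1.comp (by fun_prop : Differentiable ℝ (fun u : EuclideanSpace ℝ (Fin (2 * N)) => (t, u)))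
  have hWt : ContDiff ℝ 1 (W t) :=
    hWC1.comp (by fun_prop : ContDiff ℝ 1 (fun u : EuclideanSpace ℝ (Fin (2 * N)) => (t, u)))
  have hgc : Continuous (gradient (W t)) :=
    (InnerProductSpace.toDual ℝ _).symm.continuous.comp (hWt.continuous_fderiv one_ne_zero)
  have hzn : 0 < ‖z‖ := norm_pos_iff.2 hz
  set G := gradient (W t) z with hG
  have key := aux_one_dim (fun s => W t (s • z)) (fun s => ⟪z, gradient (W t) (s • z)⟫)
    (by
      intro s
      have h1 := (hWd (s • z)).hasGradientAt.hasFDerivAt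
      have h2 : HasDerivAt (fun s : ℝ => s • z) z s := by
        simpa using (hasDerivAt_id s).smul_const z
      have := h1.comp_hasDerivAt s h2
      simpa [real_inner_comm, Function.comp_def] using this)
    (by fun_prop)
    (by
      intro s hs
      have := hW8 t (s • z) (smul_ne_zero hs.ne' hz)
      rwa [real_inner_smul_left] at this)
    (by
      intro s hs s' hs' hne
      have := hW10 t (s • z) (s' • z)
        (by
          rw [norm_smul, norm_smul, Real.norm_of_nonneg hs.le, Real.norm_of_nonneg hs'.le]
          exact fun h => hne (mul_right_cancel₀ hzn.ne' h))
        (by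
          rw [real_inner_smul_left, real_inner_smul_right, real_inner_self_eq_norm_sq]
          positivity)
      rwa [real_inner_smul_left, real_inner_smul_left] at this)
  simp only [one_smul, ← hG] at key
  -- the gradient at `z` is a positive multiple of `z`
  obtain ⟨hWz, h2z⟩ := hW8 t z hz
  rw [← hG] at h2z
  have hG0 : G ≠ 0 := by
    intro h
    rw [h, inner_zero_right] at h2z
    linarith
  have hGn : 0 < ‖G‖ := norm_pos_iff.2 hG0
  obtain ⟨c, hc, hGc⟩ : ∃ c : ℝ, 0 < c ∧ G = c • z := by
    have h1 := (hW9 t z ((‖z‖ / ‖G‖) • G) (by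
      rw [norm_smul, Real.norm_of_nonneg (by positivity)]; field_simp)).2.1
    rw [← hG, real_inner_smul_left, real_inner_self_eq_norm_sq] at h1
    have h2 : ‖z‖ / ‖G‖ * ‖G‖ ^ 2 = ‖z‖ * ‖G‖ := by field_simp
    rw [h2] at h1
    have h3 := inner_eq_norm_mul_iff_real.1 (le_antisymm (real_inner_le_norm z G) h1)
    refine ⟨‖G‖ / ‖z‖, by positivity, ?_⟩
    rw [div_eq_inv_mul, mul_smul, h3, smul_smul, inv_mul_cancel₀ hzn.ne', one_smul]
  clear_value G
  intro r hr v
  obtain ⟨w, hw⟩ : ∃ w, w = (1 + r) • z + v := ⟨_, rfl⟩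
  rw [← hw]
  have hWw : W t w = W t ((‖w‖ / ‖z‖) • z) := (hW9 t _ _ (by
    rw [norm_smul, Real.norm_of_nonneg (by positivity)]; field_simp)).1
  have hid : ⟪(r * (r / 2 + 1)) • z + (1 + r) • v, G⟫
      = c * (‖w‖ ^ 2 - ‖z‖ ^ 2 - ‖v‖ ^ 2) / 2 := by
    have e : ‖w‖ ^ 2 = (1 + r) ^ 2 * ‖z‖ ^ 2 + 2 * (1 + r) * ⟪z, v⟫ + ‖v‖ ^ 2 := by
      rw [hw, norm_add_sq_real, norm_smul, real_inner_smul_left, mul_pow, Real.norm_eq_abs, sq_abs]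
      ring
    rw [e, hGc, inner_add_left, real_inner_smul_left, real_inner_smul_left, real_inner_smul_right,
      real_inner_smul_right, real_inner_self_eq_norm_sq, real_inner_comm]
    ring
  have hzG : ⟪z, G⟫ = c * ‖z‖ ^ 2 := by
    rw [hGc, real_inner_smul_right, real_inner_self_eq_norm_sq]
  have hmain : ¬(r = 0 ∧ v = 0) →
      ⟪(r * (r / 2 + 1)) • z + (1 + r) • v, G⟫ + W t z - W t w < 0 := by
    intro hne
    rw [hid]
    by_cases hwz : ‖w‖ = ‖z‖
    · rw [(hW9 t w z hwz).1, hwz]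
      have hv : v ≠ 0 := by
        intro hv
        apply hne
        refine ⟨?_, hv⟩
        rw [hw, hv, add_zero, norm_smul, Real.norm_of_nonneg (by linarith)] at hwz
        have : (1 + r) = 1 := mul_right_cancel₀ hzn.ne' (by rw [hwz, one_mul])
        linarith
      have := mul_pos hc (pow_pos (norm_pos_iff.2 hv) 2)
      nlinarith
    · have h1 := key (‖w‖ / ‖z‖) (by positivity) (by
        intro h
        exact hwz ((div_eq_one_iff_eq hzn.ne').1 h))
      rw [← hWw, hzG] at h1
      have h2 : c * ‖z‖ ^ 2 * ((‖w‖ / ‖z‖) ^ 2 - 1) / 2 = c * (‖w‖ ^ 2 - ‖z‖ ^ 2) / 2 := by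
        field_simp
      rw [h2] at h1
      have := mul_nonneg hc.le (sq_nonneg ‖v‖)
      nlinarith
  refine ⟨?_, hmain⟩
  by_cases h : r = 0 ∧ v = 0
  · obtain ⟨rfl, rfl⟩ := h
    simp [hw]
  · exact (hmain h).le
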